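/- Let R = ⊕_{i≥0} R_i be a Noetherian commutative ring graded by the natural numbers, M a finitely generated graded R-module, x ∈ R_1 a non-nilpotent element, and A = R/(1−x). Then tr_R(M)·A = tr_A(M ⊗_R A), i.e., the extension of the trace ideal of M along the projection R → A equals the trace ideal of the A-module M ⊗_R A. -/

import Mathlib

open scoped TensorProduct DirectSum

noncomputable section

/-- The trace ideal of an `R`-module `M`: the sum of the images of all
`R`-linear maps `M → R`. -/
def traceIdeal (R : Type*) [CommRing R] (M : Type*) [AddCommGroup M] [Module R M] :
    Ideal R :=
  ⨆ f : M →ₗ[R] R, LinearMap.range f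

/-!
Linear maps `M ⊗ A → A` are the same as `R`-linear maps `M → A`, so it suffices to lift each
`g : M → A` along `R → A`. The projection extends to `R_x → A`, and this extension has a section
`φ : A → R_x` sending the class of a homogeneous `a` of degree `i` to `a / x ^ i`. The map
`m ↦ x ^ i * φ (g m)`, for `m` of degree `i`, is then an `R`-linear lift `M → R_x` of `g`. As `M` is
finitely presented, multiplying it by a power of `x` makes it factor through `R`, and this
multiplication is invisible in `A`, where `x` becomes `1`.
-/

section TraceIdeal

variable {R M : Type*} [CommRing R] [AddCommGroup M] [Module R M]

theorem apply_mem_traceIdeal (f : M →ₗ[R] R) (m : M) : f m ∈ traceIdeal R M :=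
  Submodule.mem_iSup_of_mem f ⟨m, rfl⟩

theorem traceIdeal_le_iff {I : Ideal R} :
    traceIdeal R M ≤ I ↔ ∀ (f : M →ₗ[R] R) (m : M), f m ∈ I := by
  simp only [traceIdeal, iSup_le_iff, LinearMap.range_le_iff_comap, Submodule.eq_top_iff',
    Submodule.mem_comap]

variable {A : Type*} [CommRing A] [Algebra R A]

theorem traceIdeal_tensorProduct_le_iff {I : Ideal A} :
    traceIdeal A (A ⊗[R] M) ≤ I ↔ ∀ (g : M →ₗ[R] A) (m : M), g m ∈ I := by
  rw [traceIdeal_le_iff]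
  constructor
  · intro h g m
    simpa only [LinearMap.liftBaseChange_tmul, one_smul] using h (g.liftBaseChange A) (1 ⊗ₜ m)
  · intro h g t
    obtain ⟨g, rfl⟩ := (LinearMap.liftBaseChangeEquiv A).surjective g
    induction t using TensorProduct.induction_on with
    | zero => simp only [map_zero, I.zero_mem]
    | add s t hs ht => simpa only [map_add] using I.add_mem hs ht
    | tmul a m => exact I.smul_mem a (h g m)

variable (R M A) in
theorem map_traceIdeal_le :
    (traceIdeal R M).map (algebraMap R A) ≤ traceIdeal A (A ⊗[R] M) :=
  Ideal.map_le_iff_le_comap.2 <| traceIdeal_le_iff.2 fun f m =>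
    traceIdeal_tensorProduct_le_iff.1 le_rfl (Algebra.linearMap R A ∘ₗ f) m

theorem map_traceIdeal_eq_of_exists_lift
    (h : ∀ g : M →ₗ[R] A, ∃ f : M →ₗ[R] R, Algebra.linearMap R A ∘ₗ f = g) :
    (traceIdeal R M).map (algebraMap R A) = traceIdeal A (A ⊗[R] M) := by
  refine le_antisymm (map_traceIdeal_le R M A) (traceIdeal_tensorProduct_le_iff.2 fun g m => ?_)
  obtain ⟨f, rfl⟩ := h g
  exact Ideal.mem_map_of_mem _ (apply_mem_traceIdeal f m)

end TraceIdeal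

section Rescale

variable {κ M τ : Type*} [DecidableEq κ] [AddCommMonoid M] [SetLike τ M]
  [AddSubmonoidClass τ M] (ℳ : κ → τ) [DirectSum.Decomposition ℳ]

theorem addMonoidHom_ext_of_decomposition {N : Type*} [AddZeroClass N] {h h' : M →+ N}
    (H : ∀ i, ∀ m ∈ ℳ i, h m = h' m) : h = h' := by
  ext m
  induction m using DirectSum.Decomposition.inductionOn ℳ with
  | zero => simp only [map_zero]
  | homogeneous m => exact H _ m m.2
  | add m n hm hn => rw [map_add, map_add, hm, hn]

variable {B : Type*} [CommSemiring B] (degM : κ → ℤ)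

/-- The action of `u ∈ 𝔾ₘ(B)` on additive maps `h : M → B` out of a graded module: the additive map
equal to `u ^ degM i * h` on the component `ℳ i`. The integer weights are given by a function
`degM` on the index type, so that gradings by `ℕ`, by `ℤ` and multigradings are treated alike. -/
def rescale (u : Bˣ) (h : M →+ B) : M →+ B :=
  (DirectSum.toAddMonoid fun i =>
    (AddMonoidHom.mulLeft ((u ^ degM i : Bˣ) : B)).comp
      (h.comp (AddSubmonoidClass.subtype (ℳ i)))).comp
    (DirectSum.decomposeAddEquiv ℳ).toAddMonoidHom

variable {ℳ}

theorem rescale_apply_of_mem (u : Bˣ) (h : M →+ B) {i : κ} {m : M} (hm : m ∈ ℳ i) :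
    rescale ℳ degM u h m = (u ^ degM i : Bˣ) * h m := by
  simp [rescale, DirectSum.decompose_of_mem ℳ hm]

theorem rescale_one (h : M →+ B) : rescale ℳ degM 1 h = h :=
  addMonoidHom_ext_of_decomposition ℳ fun i m hm => by
    rw [rescale_apply_of_mem degM 1 h hm, one_zpow, Units.val_one, one_mul]

theorem rescale_rescale (u v : Bˣ) (h : M →+ B) :
    rescale ℳ degM u (rescale ℳ degM v h) = rescale ℳ degM (u * v) h :=
  addMonoidHom_ext_of_decomposition ℳ fun i m hm => by
    simp only [rescale_apply_of_mem degM _ _ hm, mul_zpow, Units.val_mul, mul_assoc]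

theorem comp_rescale {C : Type*} [CommSemiring C] (π : B →+* C) (u : Bˣ) (h : M →+ B) :
    π.toAddMonoidHom.comp (rescale ℳ degM u h) =
      rescale ℳ degM (Units.map π u) (π.toAddMonoidHom.comp h) :=
  addMonoidHom_ext_of_decomposition ℳ fun i m hm => by
    simp [rescale_apply_of_mem degM _ _ hm, ← map_zpow]

theorem apply_rescale_of_apply_eq_one {C : Type*} [CommSemiring C] (π : B →+* C) {u : Bˣ}
    (hu : π u = 1) (h : M →+ B) (m : M) : π (rescale ℳ degM u h m) = π (h m) := by
  have hmap : Units.map (π : B →* C) u = 1 := Units.ext hu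
  have hcomp := comp_rescale (ℳ := ℳ) degM π u h
  rw [hmap, rescale_one] at hcomp
  exact DFunLike.congr_fun hcomp m

variable {ι R σ : Type*} [DecidableEq ι] [Semiring R] [Module R M] [SetLike σ R]
  [AddSubmonoidClass σ R] {𝒜 : ι → σ} [DirectSum.Decomposition 𝒜] [VAdd ι κ]
  [SetLike.GradedSMul 𝒜 ℳ] {deg : ι → ℤ} {degM}

theorem rescale_smul (hdeg : ∀ i j, degM (i +ᵥ j) = deg i + degM j) (u : Bˣ) {k : R →+ B}
    {h : M →+ B} (hk : ∀ r m, h (r • m) = k r * h m) (r : R) (m : M) :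
    rescale ℳ degM u h (r • m) = rescale 𝒜 deg u k r * rescale ℳ degM u h m := by
  induction r using DirectSum.Decomposition.inductionOn 𝒜 with
  | zero => simp only [zero_smul, map_zero, zero_mul]
  | add r s hr hs => rw [add_smul, map_add, hr, hs, map_add, add_mul]
  | @homogeneous i r =>
    induction m using DirectSum.Decomposition.inductionOn ℳ with
    | zero => simp only [smul_zero, map_zero, mul_zero]
    | add m n hm hn => rw [smul_add, map_add, hm, hn, map_add, mul_add]
    | @homogeneous j m =>
      have hrm : (r : R) • (m : M) ∈ ℳ (i +ᵥ j) := SetLike.GradedSMul.smul_mem r.2 m.2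
      rw [rescale_apply_of_mem degM u h hrm, rescale_apply_of_mem deg u k r.2,
        rescale_apply_of_mem degM u h m.2, hk, hdeg, zpow_add, Units.val_mul]
      exact mul_mul_mul_comm _ _ _ _

end Rescale

section Dehomogenization

variable {ι R σ B : Type*} [DecidableEq ι] [AddMonoid ι] [SetLike σ R]

/-- The ring homomorphism equal to `u ^ deg i * f` on the component `𝒜 i`: the action of
`u ∈ 𝔾ₘ(B)` on ring homomorphisms `f : R → B`, which exists because `deg` is additive. -/
def rescaleRingHom [Semiring R] [AddSubmonoidClass σ R] (𝒜 : ι → σ) [GradedRing 𝒜]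
    [CommSemiring B] (deg : ι →+ ℤ) (u : Bˣ) (f : R →+* B) : R →+* B where
  __ := rescale 𝒜 deg u f.toAddMonoidHom
  map_one' := by
    simpa using rescale_apply_of_mem deg u f.toAddMonoidHom (SetLike.one_mem_graded 𝒜)
  map_mul' := rescale_smul (map_add deg) u (map_mul f)

theorem rescaleRingHom_inv_apply_eq_one [Semiring R] [AddSubmonoidClass σ R] {𝒜 : ι → σ}
    [GradedRing 𝒜] [CommSemiring B] {deg : ι →+ ℤ} {d : ι} (hd : deg d = 1) {x : R} (hx : x ∈ 𝒜 d)
    {u : Bˣ} {f : R →+* B} (hu : u = f x) : rescaleRingHom 𝒜 deg u⁻¹ f x = 1 :=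
  calc rescaleRingHom 𝒜 deg u⁻¹ f x = ((u⁻¹ ^ deg d : Bˣ) : B) * f x :=
        rescale_apply_of_mem deg u⁻¹ f.toAddMonoidHom hx
    _ = 1 := by rw [hd, zpow_one, ← hu, Units.inv_mul]

theorem algebraMap_quotient_span_one_sub [CommRing R] (x : R) :
    algebraMap R (R ⧸ Ideal.span {1 - x}) x = 1 :=
  ((Ideal.Quotient.mk_eq_mk_iff_sub_mem 1 x).2 (Ideal.mem_span_singleton_self _)).symm

variable [CommRing R] [AddSubmonoidClass σ R] {𝒜 : ι → σ} [GradedRing 𝒜] {deg : ι →+ ℤ}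
  [CommRing B] [Algebra R B] {d : ι} {x : R} {u : Bˣ}
  (hd : deg d = 1) (hx : x ∈ 𝒜 d) (hu : u = algebraMap R B x)

/-- The dehomogenization map `R ⧸ (1 - x) → B`, where `B` is an `R`-algebra in which `x` becomes the
unit `u`: the class of a homogeneous element `a` of degree `i` goes to `a / x ^ i`. -/
def dehomogenization : R ⧸ Ideal.span {1 - x} →+* B :=
  Ideal.Quotient.lift _ (rescaleRingHom 𝒜 deg u⁻¹ (algebraMap R B)) fun a ha => by
    obtain ⟨b, rfl⟩ := Ideal.mem_span_singleton.1 ha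
    rw [map_mul, map_sub, map_one, rescaleRingHom_inv_apply_eq_one hd hx hu, sub_self, zero_mul]

theorem apply_dehomogenization (π : B →ₐ[R] R ⧸ Ideal.span {1 - x})
    (a : R ⧸ Ideal.span {1 - x}) : π (dehomogenization hd hx hu a) = a := by
  obtain ⟨r, rfl⟩ := Ideal.Quotient.mk_surjective a
  have hπu : π u = 1 := by rw [hu, π.commutes, algebraMap_quotient_span_one_sub]
  have hπu_inv : π ↑u⁻¹ = 1 := by
    simpa only [map_mul, hπu, one_mul, map_one] using congrArg π u.mul_inv
  calc π (rescaleRingHom 𝒜 deg u⁻¹ (algebraMap R B) r) = π (algebraMap R B r) :=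
        apply_rescale_of_apply_eq_one deg (π : B →+* R ⧸ Ideal.span {1 - x}) hπu_inv
          (algebraMap R B).toAddMonoidHom r
    _ = Ideal.Quotient.mk _ r := π.commutes r

variable {κ M τ : Type*} [DecidableEq κ] [VAdd ι κ] [AddCommGroup M] [Module R M] [SetLike τ M]
  [AddSubmonoidClass τ M] (ℳ : κ → τ) [DirectSum.Decomposition ℳ] [SetLike.GradedSMul 𝒜 ℳ]
  {degM : κ → ℤ} (hdeg : ∀ i j, degM (i +ᵥ j) = deg i + degM j)
  (g : M →ₗ[R] R ⧸ Ideal.span {1 - x})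

/-- The homogenization of a linear map `g : M → R ⧸ (1 - x)` out of a graded module, with values in
an `R`-algebra `B` in which `x` becomes the unit `u`: it sends `m` of degree `i` to
`x ^ i * φ (g m)`, where `φ : R ⧸ (1 - x) → B` is the dehomogenization map. -/
def homogenization : M →ₗ[R] B where
  __ := rescale ℳ degM u ((dehomogenization hd hx hu).toAddMonoidHom.comp g.toAddMonoidHom)
  map_smul' r m := by
    have hφg (r : R) (m : M) : dehomogenization hd hx hu (g (r • m)) =
        rescale 𝒜 deg u⁻¹ (algebraMap R B).toAddMonoidHom r * dehomogenization hd hx hu (g m) := by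
      rw [map_smul, Algebra.smul_def, map_mul]
      rfl
    -- The weights `x ^ (-i)` of `φ` and `x ^ i` of the homogenization cancel.
    refine (rescale_smul (𝒜 := 𝒜) hdeg u hφg r m).trans ?_
    rw [rescale_rescale, mul_inv_cancel, rescale_one, RingHom.id_apply, Algebra.smul_def]
    rfl

theorem comp_homogenization (π : B →ₐ[R] R ⧸ Ideal.span {1 - x}) :
    π.toLinearMap ∘ₗ homogenization hd hx hu ℳ hdeg g = g := by
  ext m
  have hπu : π u = 1 := by rw [hu, π.commutes, algebraMap_quotient_span_one_sub]
  calc π (homogenization hd hx hu ℳ hdeg g m) = π (dehomogenization hd hx hu (g m)) :=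
        apply_rescale_of_apply_eq_one degM (π : B →+* R ⧸ Ideal.span {1 - x}) hπu
          ((dehomogenization hd hx hu).toAddMonoidHom.comp g.toAddMonoidHom) m
    _ = g m := apply_dehomogenization hd hx hu π (g m)

end Dehomogenization

theorem exists_lift_of_isLocalization {R L A M : Type*} [CommRing R] [CommRing L] [Algebra R L]
    [CommRing A] [Algebra R A] [AddCommGroup M] [Module R M] [Module.FinitePresentation R M]
    (S : Submonoid R) [IsLocalization S L] (hS : ∀ s ∈ S, algebraMap R A s = 1)
    (π : L →ₐ[R] A) (G : M →ₗ[R] L) :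
    ∃ f : M →ₗ[R] R, Algebra.linearMap R A ∘ₗ f = π.toLinearMap ∘ₗ G := by
  obtain ⟨f, s, hf⟩ := Module.FinitePresentation.exists_lift_of_isLocalizedModule S
    (Algebra.linearMap R L) G
  refine ⟨f, LinearMap.ext fun m => ?_⟩
  calc algebraMap R A (f m) = π (algebraMap R L (f m)) := (π.commutes _).symm
    _ = π ((s : R) • G m) := congrArg π (LinearMap.congr_fun hf m)
    _ = π (G m) := by rw [map_smul, Algebra.smul_def, hS s s.2, one_mul]

theorem traceIdeal_map_dehomogenization_general {ι κ R σ M τ : Type*} [DecidableEq ι] [AddMonoid ι]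
    [DecidableEq κ] [VAdd ι κ] [CommRing R] [SetLike σ R] [AddSubmonoidClass σ R] (𝒜 : ι → σ)
    [GradedRing 𝒜] [AddCommGroup M] [Module R M] [Module.FinitePresentation R M] [SetLike τ M]
    [AddSubmonoidClass τ M] (ℳ : κ → τ) [SetLike.GradedSMul 𝒜 ℳ] [DirectSum.Decomposition ℳ]
    (deg : ι →+ ℤ) (degM : κ → ℤ) (hdeg : ∀ i j, degM (i +ᵥ j) = deg i + degM j)
    {d : ι} (hd : deg d = 1) {x : R} (hx : x ∈ 𝒜 d) :
    (traceIdeal R M).map (Ideal.Quotient.mk (Ideal.span {1 - x})) =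
      traceIdeal (R ⧸ Ideal.span {1 - x}) ((R ⧸ Ideal.span {1 - x}) ⊗[R] M) := by
  refine map_traceIdeal_eq_of_exists_lift fun g => ?_
  have hx_one := algebraMap_quotient_span_one_sub x
  let π : Localization.Away x →ₐ[R] R ⧸ Ideal.span {1 - x} :=
    IsLocalization.Away.liftAlgHom x (f := Algebra.ofId R _) (hx_one ▸ isUnit_one)
  have hu : IsUnit (algebraMap R (Localization.Away x) x) :=
    IsLocalization.Away.algebraMap_isUnit x
  have hpowers : ∀ s ∈ Submonoid.powers x, algebraMap R (R ⧸ Ideal.span {1 - x}) s = 1 := by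
    rintro _ ⟨n, rfl⟩
    rw [map_pow, hx_one, one_pow]
  obtain ⟨f, hf⟩ := exists_lift_of_isLocalization (Submonoid.powers x) hpowers π
    (homogenization hd hx hu.unit_spec ℳ hdeg g)
  exact ⟨f, hf.trans (comp_homogenization hd hx hu.unit_spec ℳ hdeg g π)⟩

/-- Let `R = ⊕_{i≥0} R_i` be a Noetherian graded ring, `M` a
finitely generated graded `R`-module, `x ∈ R_1` non-nilpotent and
`A = R/(1−x)`.  Then `tr_R(M)·A = tr_A(M ⊗_R A)`. -/
theorem traceIdeal_map_dehomogenization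
    (R : Type*) [CommRing R] [IsNoetherianRing R]
    (𝒜 : ℕ → AddSubgroup R) [GradedRing 𝒜]
    (M : Type*) [AddCommGroup M] [Module R M] [Module.Finite R M]
    (ℳ : ℕ → AddSubgroup M) [SetLike.GradedSMul 𝒜 ℳ] [DirectSum.Decomposition ℳ]
    (x : R) (hx : x ∈ 𝒜 1) (hnil : ¬ IsNilpotent x) :
    (traceIdeal R M).map (Ideal.Quotient.mk (Ideal.span {1 - x})) =
      traceIdeal (R ⧸ Ideal.span {1 - x}) ((R ⧸ Ideal.span {1 - x}) ⊗[R] M) := by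
  have : Module.FinitePresentation R M := Module.finitePresentation_of_finite R M
  exact traceIdeal_map_dehomogenization_general 𝒜 ℳ (Nat.castAddMonoidHom ℤ) Nat.cast Nat.cast_add
    (d := 1) Nat.cast_one hx

end
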